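/- Let k be a field, and let L = [h_1, h_2 g_2, …, h_{ℓ−1} g_{ℓ−1}, g_ℓ] be a list of polynomials of k[x,y] where h_1, …, h_{ℓ−1} ∈ k[x] are monic non-constant with h_i dividing h_{i−1} for 2 ≤ i ≤ ℓ−1, and g_2, …, g_ℓ ∈ k[x][y] are monic in y with strictly increasing degrees in y. Suppose L is a lexicographic Gröbner basis (for x ≺ y) of the ideal it generates. Given a monic non-constant h_0 ∈ k[x] and g_{ℓ+1} ∈ k[x][y] monic in y with deg_y(g_{ℓ+1}) strictly larger than deg_y of all g_i, the list L' = [h_0·f : f ∈ L] concatenated with [g_{ℓ+1}] is a lexicographic Gröbner basis if and only if g_{ℓ+1} belongs to the ideal generated by L. Moreover L' is minimal if and only if L is minimal. -/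

import Mathlib

open Polynomial

/-! We view `k[x,y]` as `k[x][y]`, i.e. `Polynomial (Polynomial k)` where the outer
variable is `y` and the inner one is `x`.  For the lexicographic order with `x ≺ y`,
the leading monomial of a nonzero `f ∈ k[x][y]` is `y^(deg_y f) · x^(deg_x lc_y(f))`,
recorded as the pair `(deg_y, deg_x)`; divisibility of monomials is the componentwise
order. -/

/-- leading monomial (for lex with `x ≺ y`) of `f ∈ k[x][y]`, as a pair
`(degree in y, degree in x of the leading y-coefficient)`. -/
noncomputable def lmLex {k : Type*} [Field k] (f : Polynomial (Polynomial k)) : ℕ × ℕ :=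
  (f.natDegree, f.leadingCoeff.natDegree)

/-- divisibility of monomials `y^a x^b`, encoded as pairs `(a, b)`. -/
def monDvd (m m' : ℕ × ℕ) : Prop := m.1 ≤ m'.1 ∧ m.2 ≤ m'.2

/-- `L` is a lexicographic Gröbner basis (for `x ≺ y`) of the ideal it generates:
the leading monomial of every nonzero element of the ideal is divisible by the
leading monomial of some element of `L`. -/
noncomputable def IsLexGB {k : Type*} [Field k] (L : List (Polynomial (Polynomial k))) : Prop :=
  ∀ f ∈ Ideal.span {g | g ∈ L}, f ≠ 0 →
    ∃ g ∈ L, g ≠ 0 ∧ monDvd (lmLex g) (lmLex f)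

/-- `L` is a *minimal* lexicographic Gröbner basis: it is a lexicographic Gröbner
basis and no leading monomial of an element divides the leading monomial of
another element. -/
noncomputable def IsMinimalLexGB {k : Type*} [Field k]
    (L : List (Polynomial (Polynomial k))) : Prop :=
  IsLexGB L ∧ ∀ i j : Fin L.length, i ≠ j → ¬ monDvd (lmLex (L.get i)) (lmLex (L.get j))

section LazardHelpers

variable {k : Type*} [Field k]

/-- one reduction step: the leading term of `f` is cancelled by a multiple of `p`. -/
theorem lazard_reduce (f p : Polynomial (Polynomial k)) (hf : f ≠ 0) (hp : p ≠ 0)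
    (hd : monDvd (lmLex p) (lmLex f)) :
    ∃ m : Polynomial (Polynomial k), (f - m * p).degree ≤ f.degree ∧
      ((f - m * p).coeff f.natDegree).degree < f.leadingCoeff.degree := by
  obtain ⟨h1, h2⟩ := hd
  simp only [lmLex] at h1 h2
  have hlf : f.leadingCoeff ≠ 0 := leadingCoeff_ne_zero.2 hf
  have hlp : p.leadingCoeff ≠ 0 := leadingCoeff_ne_zero.2 hp
  have hlf' : f.leadingCoeff.leadingCoeff ≠ 0 := leadingCoeff_ne_zero.2 hlf
  have hlp' : p.leadingCoeff.leadingCoeff ≠ 0 := leadingCoeff_ne_zero.2 hlp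
  set c : k := f.leadingCoeff.leadingCoeff / p.leadingCoeff.leadingCoeff with hc
  have hc0 : c ≠ 0 := div_ne_zero hlf' hlp'
  set u : Polynomial k := C c * X ^ (f.leadingCoeff.natDegree - p.leadingCoeff.natDegree) with hu
  have hu0 : u ≠ 0 := by simp [hu, hc0]
  have hund : u.natDegree = f.leadingCoeff.natDegree - p.leadingCoeff.natDegree := by
    rw [hu, natDegree_C_mul_X_pow _ _ hc0]
  have hulc : u.leadingCoeff = c := by simp [hu]
  refine ⟨C u * X ^ (f.natDegree - p.natDegree), ?_, ?_⟩
  · refine (degree_sub_le _ _).trans (max_le le_rfl ?_)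
    rw [degree_mul, degree_C_mul_X_pow _ hu0, degree_eq_natDegree hf, degree_eq_natDegree hp]
    norm_cast
    omega
  · have hco : (C u * X ^ (f.natDegree - p.natDegree) * p).coeff f.natDegree
        = u * p.leadingCoeff := by
      rw [mul_assoc, coeff_C_mul, coeff_X_pow_mul']
      rw [if_pos (by omega), Nat.sub_sub_self h1]
      rfl
    rw [coeff_sub, hco]
    change (f.leadingCoeff - u * p.leadingCoeff).degree < _
    apply degree_sub_lt
    · rw [degree_mul, degree_eq_natDegree hu0, degree_eq_natDegree hlp, degree_eq_natDegree hlf,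
        hund]
      norm_cast
      omega
    · exact hlf
    · rw [leadingCoeff_mul, hulc, hc, div_mul_cancel₀ _ hlp']

/-- Elements of low degree of an ideal reduce to zero. -/
theorem lazard_reduce_all (I J : Ideal (Polynomial (Polynomial k))) (hJI : J ≤ I)
    (N : WithBot ℕ)
    (H : ∀ f ∈ I, f ≠ 0 → f.degree < N → ∃ p ∈ J, p ≠ 0 ∧ monDvd (lmLex p) (lmLex f)) :
    ∀ (a b : WithBot ℕ) (f : Polynomial (Polynomial k)), f.degree = a →
      f.leadingCoeff.degree = b → f ∈ I → f.degree < N → f ∈ J := by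
  intro a
  induction a using WellFoundedLT.induction with
  | ind a iha =>
  intro b
  induction b using WellFoundedLT.induction with
  | ind b ihb =>
  intro f ha hb hfI hfN
  by_cases hf : f = 0
  · rw [hf]; exact J.zero_mem
  obtain ⟨p, hpJ, hp, hd⟩ := H f hfI hf hfN
  obtain ⟨m, hm1, hm2⟩ := lazard_reduce f p hf hp hd
  have hmp : m * p ∈ J := J.mul_mem_left _ hpJ
  have hr : f - m * p ∈ I := I.sub_mem hfI (hJI hmp)
  have hrN : (f - m * p).degree < N := hm1.trans_lt hfN
  have key : f - m * p ∈ J := by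
    rcases hm1.lt_or_eq with hlt | heq
    · exact iha _ (ha ▸ hlt) _ _ rfl rfl hr hrN
    · refine ihb _ ?_ _ (heq.trans ha) rfl hr hrN
      rw [← hb]
      unfold leadingCoeff
      rw [natDegree_eq_natDegree heq]
      exact hm2
  have := J.add_mem key hmp
  simpa using this

theorem lazard_span (L L' : List (Polynomial (Polynomial k))) (h₀ : Polynomial k)
    (g' : Polynomial (Polynomial k))
    (hL' : L' = (L.map fun f => Polynomial.C h₀ * f) ++ [g']) :
    Ideal.span {f | f ∈ L'} =
      Ideal.span {C h₀} * Ideal.span {f | f ∈ L} ⊔ Ideal.span {g'} := by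
  rw [Ideal.span_mul_span', ← Ideal.span_union]
  congr 1
  ext f
  simp [hL', eq_comm]
  exact or_comm

theorem lazard_lm_C_mul (h₀ : Polynomial k) (h0 : h₀ ≠ 0) (p : Polynomial (Polynomial k))
    (hp : p ≠ 0) : lmLex (C h₀ * p) = ((lmLex p).1, h₀.natDegree + (lmLex p).2) := by
  have hl : p.leadingCoeff ≠ 0 := leadingCoeff_ne_zero.2 hp
  simp [lmLex, natDegree_mul, h0, hp, hl, leadingCoeff_mul, natDegree_C_mul]

theorem lazard_main (L L' : List (Polynomial (Polynomial k))) (h₀ : Polynomial k)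
    (g' : Polynomial (Polynomial k)) (h₀mon : h₀.Monic) (h₀deg : 0 < h₀.natDegree)
    (g'mon : g'.Monic) (hL0 : ∀ p ∈ L, p ≠ 0) (hLd : ∀ p ∈ L, p.natDegree < g'.natDegree)
    (G : Polynomial (Polynomial k)) (hG : G ∈ L) (Gmon : G.Monic)
    (hGB : IsLexGB L)
    (hL' : L' = (L.map fun f => Polynomial.C h₀ * f) ++ [g']) :
    (IsLexGB L' ↔ g' ∈ Ideal.span {f | f ∈ L}) ∧
    (g' ∈ Ideal.span {f | f ∈ L} → (IsMinimalLexGB L' ↔ IsMinimalLexGB L)) := by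
  have h0 : h₀ ≠ 0 := h₀mon.ne_zero
  have hC0 : (C h₀ : Polynomial (Polynomial k)) ≠ 0 := by simpa using h0
  have hsp := lazard_span L L' h₀ g' hL'
  have lmg : lmLex g' = (g'.natDegree, 0) := by simp [lmLex, g'mon.leadingCoeff]
  have hg0 : g' ≠ 0 := g'mon.ne_zero
  have hiff : IsLexGB L' ↔ g' ∈ Ideal.span {f | f ∈ L} := by
    constructor
    · intro hGB'
      have hall := lazard_reduce_all (Ideal.span {f | f ∈ L'})
        (Ideal.span {C h₀} * Ideal.span {f | f ∈ L}) (hsp ▸ le_sup_left) g'.degree (by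
          intro f hf hf0 hfd
          obtain ⟨p, hp, hp0, hpd⟩ := hGB' f hf hf0
          refine ⟨p, ?_, hp0, hpd⟩
          rw [hL', List.mem_append, List.mem_map, List.mem_singleton] at hp
          rcases hp with ⟨q, hq, rfl⟩ | rfl
          · exact Ideal.mul_mem_mul (Ideal.mem_span_singleton_self _) (Ideal.subset_span hq)
          · exact absurd (natDegree_lt_natDegree hf0 hfd) (not_lt.2 hpd.1))
      have hGd := hLd G hG
      set r := g' - G * X ^ (g'.natDegree - G.natDegree) with hr
      have hrd : r.degree < g'.degree := by
        apply degree_sub_lt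
        · rw [degree_mul, degree_X_pow, degree_eq_natDegree hg0,
            degree_eq_natDegree Gmon.ne_zero]
          norm_cast
          omega
        · exact hg0
        · simp [g'mon.leadingCoeff, Gmon.leadingCoeff]
      have hGI : G ∈ Ideal.span {f | f ∈ L} := Ideal.subset_span hG
      have hmem : C h₀ * r ∈ Ideal.span {f | f ∈ L'} := by
        rw [hsp, hr, mul_sub]
        refine Ideal.sub_mem _ ?_ ?_
        · exact Ideal.mem_sup_right (Ideal.mul_mem_left _ _ (Ideal.mem_span_singleton_self _))
        · exact Ideal.mem_sup_left (Ideal.mul_mem_mul (Ideal.mem_span_singleton_self _)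
            (Ideal.mul_mem_right _ _ hGI))
      have h1 := hall _ _ (C h₀ * r) rfl rfl hmem (by rw [degree_C_mul h0]; exact hrd)
      obtain ⟨z, hz, hze⟩ := Ideal.mem_span_singleton_mul.1 h1
      have hzr : z = r := mul_left_cancel₀ hC0 hze
      have : g' = r + G * X ^ (g'.natDegree - G.natDegree) := by rw [hr]; ring
      rw [this]
      exact Ideal.add_mem _ (hzr ▸ hz) (Ideal.mul_mem_right _ _ hGI)
    · intro hg f hf hf0
      by_cases hfd : g'.natDegree ≤ f.natDegree
      · refine ⟨g', by simp [hL'], hg0, ?_⟩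
        rw [lmg]
        exact ⟨hfd, Nat.zero_le _⟩
      rw [not_le] at hfd
      rw [hsp] at hf
      obtain ⟨u, hu, v, hv, huv⟩ := Submodule.mem_sup.1 hf
      obtain ⟨a, ha, rfl⟩ := Ideal.mem_span_singleton_mul.1 hu
      obtain ⟨b, rfl⟩ := Ideal.mem_span_singleton.1 hv
      have hdiv := modByMonic_add_div a g'
      have hmodd : (a %ₘ g').degree < g'.degree := degree_modByMonic_lt a g'mon
      have ha' : a %ₘ g' ∈ Ideal.span {f | f ∈ L} := by
        rw [modByMonic_eq_sub_mul_div]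
        exact Ideal.sub_mem _ ha (Ideal.mul_mem_right _ _ hg)
      have hfeq : f - C h₀ * (a %ₘ g') = g' * (b + C h₀ * (a /ₘ g')) := by
        rw [← huv]
        linear_combination (-C h₀) * hdiv
      have hlt : (f - C h₀ * (a %ₘ g')).degree < g'.degree := by
        refine (degree_sub_le _ _).trans_lt (max_lt (degree_lt_degree hfd) ?_)
        rw [degree_C_mul h0]; exact hmodd
      have hz : f - C h₀ * (a %ₘ g') = 0 :=
        eq_zero_of_dvd_of_degree_lt ⟨_, hfeq⟩ hlt
      have hf' : f = C h₀ * (a %ₘ g') := sub_eq_zero.1 hz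
      have ha0 : a %ₘ g' ≠ 0 := by
        intro h; rw [h, mul_zero] at hf'; exact hf0 hf'
      obtain ⟨p, hp, hp0, hpd⟩ := hGB _ ha' ha0
      refine ⟨C h₀ * p, ?_, mul_ne_zero hC0 hp0, ?_⟩
      · rw [hL']
        exact List.mem_append_left _ (List.mem_map_of_mem hp)
      · rw [hf', lazard_lm_C_mul _ h0 _ hp0, lazard_lm_C_mul _ h0 _ ha0]
        exact ⟨hpd.1, Nat.add_le_add_left hpd.2 _⟩
  refine ⟨hiff, fun hg => ?_⟩
  have hmul : ∀ p ∈ L, ∀ q ∈ L, (monDvd (lmLex (C h₀ * p)) (lmLex (C h₀ * q)) ↔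
      monDvd (lmLex p) (lmLex q)) := by
    intro p hp q hq
    rw [lazard_lm_C_mul _ h0 _ (hL0 p hp), lazard_lm_C_mul _ h0 _ (hL0 q hq)]
    simp [monDvd]
  have hgn : ∀ p ∈ L, ¬ monDvd (lmLex g') (lmLex (C h₀ * p)) := by
    intro p hp hd
    rw [lazard_lm_C_mul _ h0 _ (hL0 p hp)] at hd
    exact absurd (hLd p hp) (not_lt.2 hd.1)
  have hng : ∀ p ∈ L, ¬ monDvd (lmLex (C h₀ * p)) (lmLex g') := by
    intro p hp hd
    rw [lazard_lm_C_mul _ h0 _ (hL0 p hp), lmg] at hd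
    have := hd.2
    simp only at this
    omega
  have hlen : L'.length = L.length + 1 := by simp [hL']
  have hlt : ∀ i (hi : i < L.length) (hi' : i < L'.length), L'[i] = C h₀ * L[i] := by
    intro i hi hi'
    subst hL'
    rw [List.getElem_append_left (by simpa using hi)]
    simp
  have hlast : ∀ i (hi : ¬ i < L.length) (hi' : i < L'.length), L'[i] = g' := by
    intro i hi hi'
    subst hL'
    rw [List.getElem_append_right (by simpa using hi)]
    simp
  constructor
  · rintro ⟨-, hm⟩
    refine ⟨hGB, ?_⟩
    rintro ⟨i, hi⟩ ⟨j, hj⟩ hij hd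
    have hij' : i ≠ j := by simpa using hij
    refine hm ⟨i, by omega⟩ ⟨j, by omega⟩ (by simpa using hij') ?_
    simp only [List.get_eq_getElem] at hd ⊢
    rw [hlt i hi, hlt j hj, hmul _ (List.getElem_mem _) _ (List.getElem_mem _)]
    exact hd
  · rintro ⟨-, hm⟩
    refine ⟨hiff.2 hg, ?_⟩
    rintro ⟨i, hi⟩ ⟨j, hj⟩ hij hd
    have hij' : i ≠ j := by simpa using hij
    simp only [List.get_eq_getElem] at hd
    by_cases hi' : i < L.length
    · by_cases hj' : j < L.length
      · rw [hlt i hi', hlt j hj', hmul _ (List.getElem_mem _) _ (List.getElem_mem _)] at hd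
        exact hm ⟨i, hi'⟩ ⟨j, hj'⟩ (by simpa using hij') hd
      · rw [hlt i hi', hlast j hj'] at hd
        exact hng _ (List.getElem_mem _) hd
    · by_cases hj' : j < L.length
      · rw [hlt j hj', hlast i hi'] at hd
        exact hgn _ (List.getElem_mem _) hd
      · omega

end LazardHelpers

/-- **Lazard's structural theorem, part (B).**
Let `L = [h₁, h₂ g₂, …, h_{ℓ-1} g_{ℓ-1}, g_ℓ]` with `h₁, …, h_{ℓ-1} ∈ k[x]` monic
non-constant, `hᵢ ∣ h_{i-1}`, and `g₂, …, g_ℓ` monic in `y` of strictly increasing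
`y`-degrees, and suppose `L` is a lexicographic Gröbner basis.  For `h₀ ∈ k[x]` monic
non-constant and `g' ∈ k[x][y]` monic in `y` of `y`-degree larger than those of all
the `gᵢ`, the list `L' = [h₀·f : f ∈ L] ++ [g']` is a lexicographic Gröbner basis
iff `g'` lies in the ideal generated by `L`; moreover `L'` is minimal iff `L` is. -/
theorem lazard_partB {k : Type*} [Field k] (ℓ : ℕ) (hℓ : 2 ≤ ℓ)
    (h : ℕ → Polynomial k) (g : ℕ → Polynomial (Polynomial k))
    (hmon : ∀ i, 1 ≤ i → i ≤ ℓ - 1 → (h i).Monic ∧ 0 < (h i).natDegree)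
    (hdvd : ∀ i, 2 ≤ i → i ≤ ℓ - 1 → h i ∣ h (i - 1))
    (gmon : ∀ i, 2 ≤ i → i ≤ ℓ → (g i).Monic)
    (ginc : ∀ i, 2 ≤ i → i < ℓ → (g i).natDegree < (g (i + 1)).natDegree)
    (L : List (Polynomial (Polynomial k)))
    (hL : L = [Polynomial.C (h 1)] ++
      ((List.range (ℓ - 2)).map fun i => Polynomial.C (h (i + 2)) * g (i + 2)) ++ [g ℓ])
    (hGB : IsLexGB L)
    (h₀ : Polynomial k) (h₀mon : h₀.Monic) (h₀deg : 0 < h₀.natDegree)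
    (g' : Polynomial (Polynomial k)) (g'mon : g'.Monic)
    (g'deg : ∀ i, 2 ≤ i → i ≤ ℓ → (g i).natDegree < g'.natDegree)
    (L' : List (Polynomial (Polynomial k)))
    (hL' : L' = (L.map fun f => Polynomial.C h₀ * f) ++ [g']) :
    (IsLexGB L' ↔ g' ∈ Ideal.span {f | f ∈ L}) ∧
    (g' ∈ Ideal.span {f | f ∈ L} → (IsMinimalLexGB L' ↔ IsMinimalLexGB L)) := by
  have hmem : ∀ p ∈ L, p ≠ 0 ∧ p.natDegree < g'.natDegree := by
    intro p hp
    rw [hL] at hp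
    simp only [List.mem_append, List.mem_singleton, List.mem_map, List.mem_range] at hp
    rcases hp with (rfl | ⟨i, hi, rfl⟩) | rfl
    · have h1 := (hmon 1 le_rfl (by omega)).1.ne_zero
      have h2 := g'deg ℓ hℓ le_rfl
      refine ⟨by simpa using h1, ?_⟩
      rw [natDegree_C]
      omega
    · have h1 := (hmon (i + 2) (by omega) (by omega)).1.ne_zero
      have h2 := (gmon (i + 2) (by omega) (by omega)).ne_zero
      refine ⟨mul_ne_zero (by simpa using h1) h2, ?_⟩
      rw [natDegree_C_mul h1]
      exact g'deg _ (by omega) (by omega)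
    · exact ⟨(gmon ℓ hℓ le_rfl).ne_zero, g'deg ℓ hℓ le_rfl⟩
  exact lazard_main L L' h₀ g' h₀mon h₀deg g'mon (fun p hp => (hmem p hp).1)
    (fun p hp => (hmem p hp).2) (g ℓ) (by simp [hL]) (gmon ℓ hℓ le_rfl) hGB hL'
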